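/- arXiv:2201.08632 — 2 statements merged into one kernel-verified Lean document; each statement's English description precedes it below -/
import Mathlib

section
/- Let q be a prime power and let ν, m₁, m₂, t be positive integers with ν > m₁ ≥ t+1, ν > m₂ ≥ t+1. Let M ∈ 𝒫_{m₂+1}, let T be a t-dimensional subspace of M, and let j be an integer with t+1 ≤ j ≤ min{m₁, m₂+1}. Then [m₂−t+1 choose j−t]_q · N'(j;m₁;2ν) = Σ_{i=j}^{m₂+1} [i−t choose j−t]_q · |𝒜_i(M,T;m₁)|, where 𝒜_i(M,T;m₁) = {F ∈ 𝒫_{m₁} : T ⊆ F and dim(F ∩ M) = i}. -/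
open Finset Module

noncomputable section

/-- Gaussian binomial coefficient `[n choose k]_q` as a rational number. -/
def gaussBinom (q n k : ℕ) : ℚ :=
  ∏ i ∈ Finset.range k, ((q : ℚ) ^ ((n : ℤ) - i) - 1) / ((q : ℚ) ^ ((k : ℤ) - i) - 1)

/-- `N'(a; m; 2ν)`, the number of `m`-dim totally isotropic subspaces containing
a fixed `a`-dim one. -/
def Nprime (q a m ν : ℕ) : ℚ :=
  ∏ i ∈ Finset.Icc 1 (m - a), ((q : ℚ) ^ (2 * ((ν : ℤ) - m + i)) - 1) / ((q : ℚ) ^ (i : ℤ) - 1)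

variable {K V : Type*} [Field K] [AddCommGroup V] [Module K V]

/-- A subspace is totally isotropic w.r.t. the bilinear form `f`. -/
def TotallyIsotropic (f : V →ₗ[K] V →ₗ[K] K) (W : Submodule K V) : Prop :=
  ∀ x ∈ W, ∀ y ∈ W, f x y = 0

/-- `polar f m` = `𝒫_m`, the set of `m`-dimensional totally isotropic subspaces. -/
def polar (f : V →ₗ[K] V →ₗ[K] K) (m : ℕ) : Set (Submodule K V) :=
  {W | TotallyIsotropic f W ∧ finrank K W = m}

/-- `X` is a `t`-cover of the family `ℱ`. -/
def IsTCover (f : V →ₗ[K] V →ₗ[K] K) (t : ℕ) (ℱ : Set (Submodule K V))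
    (X : Submodule K V) : Prop :=
  TotallyIsotropic f X ∧ ∀ F ∈ ℱ, t ≤ finrank K ↥(X ⊓ F)

/-- `τ_t(ℱ)`, the minimum dimension of a `t`-cover of `ℱ`. -/
def tauCover (f : V →ₗ[K] V →ₗ[K] K) (t : ℕ) (ℱ : Set (Submodule K V)) : ℕ :=
  sInf {x | ∃ X, IsTCover f t ℱ X ∧ finrank K ↥X = x}

def C1 (f : V →ₗ[K] V →ₗ[K] K) (M T : Submodule K V) (m t : ℕ) : Set (Submodule K V) :=
  {F | F ∈ polar f m ∧ T ≤ F ∧ t + 1 ≤ finrank K ↥(F ⊓ M)}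

def C2 (f : V →ₗ[K] V →ₗ[K] K) (M T : Submodule K V) (m : ℕ) : Set (Submodule K V) :=
  {F | F ∈ polar f m ∧ T ≤ F} ∪ {F | F ∈ polar f m ∧ F ≤ M}

def C3 (f : V →ₗ[K] V →ₗ[K] K) (S : Submodule K V) (m : ℕ) : Set (Submodule K V) :=
  {F | F ∈ polar f m ∧ S ≤ F}

def C4 (f : V →ₗ[K] V →ₗ[K] K) (S : Submodule K V) (m t : ℕ) : Set (Submodule K V) :=
  {F | F ∈ polar f m ∧ t ≤ finrank K ↥(F ⊓ S)}

def s0 (q ν m s t : ℕ) : ℚ :=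
  gaussBinom q (s - t) 1 * Nprime q (t + 1) m ν - q * gaussBinom q (s - t) 2 * Nprime q (t + 2) m ν

/-!
Both sides count the pairs `(R, F)` with `T ≤ R ≤ F ⊓ M`, `dim R = j` and `F ∈ 𝒫_{m₁}`: summing over
`R` first gives the left-hand side, and grouping the `F` by `dim (F ⊓ M)` gives the right-hand side.

The numbers of choices for `R` and for `F` are instances of one formula. Let `𝒮` be a family of
subspaces closed under passing to subspaces, such that each `A ∈ 𝒮` has `c (dim A)` vectors `v ∉ A`
with `A + ⟨v⟩ ∈ 𝒮`. Counting the pairs `(v, F)` with `v ∈ F \ A` shows inductively that exactly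
`∏_{dim A ≤ i < m} c i / (q ^ m - q ^ i)` members of `𝒮` of dimension `m` contain `A`. Here
`c i = q ^ dim W - q ^ i` for the subspaces of `W`, and `c i = q ^ (2 * ν - i) - q ^ i`, counting
`Aᗮ \ A`, for the totally isotropic subspaces.
-/

section ProductFormulas

theorem pow_mul_zpow_sub_one {F : Type*} [DivisionRing F] {x : F} (hx : x ≠ 0) {a b : ℕ} {z : ℤ}
    (h : a + z = b) : x ^ a * (x ^ z - 1) = x ^ b - x ^ a := by
  rw [mul_sub, mul_one, ← zpow_natCast, ← zpow_natCast, ← zpow_add₀ hx, h]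

theorem gaussBinom_sub_sub_eq_prod_Ico {q n k t : ℕ} (hq : q ≠ 0) (htn : t ≤ n) (htk : t ≤ k) :
    gaussBinom q (n - t) (k - t) =
      ∏ i ∈ Ico t k, ((q : ℚ) ^ n - (q : ℚ) ^ i) / ((q : ℚ) ^ k - (q : ℚ) ^ i) := by
  have hq' : (q : ℚ) ≠ 0 := by exact_mod_cast hq
  rw [gaussBinom, prod_Ico_eq_prod_range]
  refine prod_congr rfl fun i _ => ?_
  rw [← pow_mul_zpow_sub_one hq' (a := t + i) (z := (n - t : ℕ) - i) (by omega),
    ← pow_mul_zpow_sub_one hq' (a := t + i) (z := (k - t : ℕ) - i) (by omega),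
    mul_div_mul_left _ _ (pow_ne_zero _ hq')]

theorem Nprime_eq_prod_Ico {q a m ν : ℕ} (hq : q ≠ 0) (hm : m ≤ ν) :
    Nprime q a m ν =
      ∏ i ∈ Ico a m, ((q : ℚ) ^ (2 * ν - i) - (q : ℚ) ^ i) / ((q : ℚ) ^ m - (q : ℚ) ^ i) := by
  have hq' : (q : ℚ) ≠ 0 := by exact_mod_cast hq
  refine prod_nbij' (m - ·) (m - ·) ?_ ?_ ?_ ?_ fun i hi => ?_
  any_goals simp only [mem_Icc, mem_Ico]; omega
  rw [mem_Icc] at hi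
  rw [← pow_mul_zpow_sub_one hq' (a := m - i) (z := 2 * ((ν : ℤ) - m + i)) (by omega),
    ← pow_mul_zpow_sub_one hq' (a := m - i) (b := m) (z := i) (by omega),
    mul_div_mul_left _ _ (pow_ne_zero _ hq')]

end ProductFormulas

section DoubleCounting

variable {α β R : Type*} [Semiring R]

theorem ncard_mul_eq_sum_ncard_fiber_mul {ι : Type*} (r : α → β → Prop) {s : Set α} {t : Set β}
    (hs : s.Finite) (ht : t.Finite) {g : β → ι} {I : Finset ι} {x : R} {y : ι → R}
    (hI : ∀ a ∈ s, ∀ b ∈ t, r a b → g b ∈ I)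
    (hx : ∀ a ∈ s, ({b ∈ t | r a b}.ncard : R) = x)
    (hy : ∀ b ∈ t, g b ∈ I → ({a ∈ s | r a b}.ncard : R) = y (g b)) :
    s.ncard * x = ∑ i ∈ I, {b ∈ t | g b = i}.ncard * y i := by
  classical
  lift s to Finset α using hs
  lift t to Finset β using ht
  simp only [mem_coe, ← coe_filter, Set.ncard_coe_finset] at hI hx hy ⊢
  calc (#s : R) * x
    _ = ∑ a ∈ s, (#{b ∈ t | r a b} : R) := by rw [sum_congr rfl hx, sum_const, nsmul_eq_mul]
    _ = ∑ b ∈ t, (#{a ∈ s | r a b} : R) := by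
      exact_mod_cast congrArg (Nat.cast : ℕ → R)
        (sum_card_bipartiteAbove_eq_sum_card_bipartiteBelow r)
    _ = ∑ b ∈ t with g b ∈ I, (#{a ∈ s | r a b} : R) := by
      refine (sum_filter_of_ne fun b hb hne => ?_).symm
      have hcard : #{a ∈ s | r a b} ≠ 0 := fun h => hne (by rw [h, Nat.cast_zero])
      obtain ⟨a, ha⟩ := card_ne_zero.1 hcard
      exact hI a (mem_filter.1 ha).1 b hb (mem_filter.1 ha).2
    _ = ∑ b ∈ t with g b ∈ I, y (g b) :=
      sum_congr rfl fun b hb => hy b (mem_filter.1 hb).1 (mem_filter.1 hb).2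
    _ = ∑ i ∈ I, ∑ b ∈ t with g b = i, y i := (sum_fiberwise_eq_sum_filter' t I g y).symm
    _ = ∑ i ∈ I, (#{b ∈ t | g b = i} : R) * y i := by simp only [sum_const, nsmul_eq_mul]

theorem ncard_mul_eq_ncard_mul (r : α → β → Prop) {s : Set α} {t : Set β} (hs : s.Finite)
    (ht : t.Finite) {x y : R} (hx : ∀ a ∈ s, ({b ∈ t | r a b}.ncard : R) = x)
    (hy : ∀ b ∈ t, ({a ∈ s | r a b}.ncard : R) = y) :
    s.ncard * x = t.ncard * y := by
  simpa using ncard_mul_eq_sum_ncard_fiber_mul (g := fun _ => ()) (I := {()}) (y := fun _ => y) r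
    hs ht (by simp) hx fun b hb _ => hy b hb

end DoubleCounting

section HereditaryFamilies

/-- The vectors `v ∉ A` for which `A + ⟨v⟩` still belongs to the family `𝒮`; counting these
one-step extensions is what determines the number of members of `𝒮` above `A`. -/
def extensionVectors (𝒮 : Set (Submodule K V)) (A : Submodule K V) : Set V :=
  {v | v ∉ A ∧ A ⊔ Submodule.span K {v} ∈ 𝒮}

/-- The `m`-dimensional members of the family `𝒮` that contain `A`: for `𝒮 = Set.Iic W` these are
counted by `gaussBinom`, for the totally isotropic subspaces by `Nprime`. -/
def membersAbove (𝒮 : Set (Submodule K V)) (m : ℕ) (A : Submodule K V) : Set (Submodule K V) :=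
  {F | F ∈ 𝒮 ∧ A ≤ F ∧ finrank K F = m}

theorem membersAbove_finrank_self [FiniteDimensional K V] {𝒮 : Set (Submodule K V)}
    {A : Submodule K V} (hA : A ∈ 𝒮) : membersAbove 𝒮 (finrank K A) A = {A} := by
  ext F
  constructor
  · rintro ⟨-, hAF, hF⟩
    exact (Submodule.eq_of_le_of_finrank_eq hAF hF.symm).symm
  · rintro rfl
    exact ⟨hA, le_rfl, rfl⟩

theorem sep_mem_membersAbove (𝒮 : Set (Submodule K V)) (m : ℕ) (A : Submodule K V) (v : V) :
    {F ∈ membersAbove 𝒮 m A | v ∈ F} = membersAbove 𝒮 m (A ⊔ Submodule.span K {v}) := by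
  ext F
  simp only [membersAbove, Set.mem_ofPred_eq, sup_le_iff, Submodule.span_singleton_le_iff_mem]
  tauto

theorem sep_mem_extensionVectors {𝒮 : Set (Submodule K V)} (h𝒮 : IsLowerSet 𝒮)
    {A F : Submodule K V} (hF : F ∈ 𝒮) (hAF : A ≤ F) :
    {v ∈ extensionVectors 𝒮 A | v ∈ F} = (F : Set V) \ A := by
  ext v
  constructor
  · rintro ⟨⟨hvA, -⟩, hvF⟩
    exact ⟨hvF, hvA⟩
  · rintro ⟨hvF, hvA⟩
    have hle : A ⊔ Submodule.span K {v} ≤ F :=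
      sup_le hAF ((Submodule.span_singleton_le_iff_mem v F).2 hvF)
    exact ⟨⟨hvA, h𝒮 hle hF⟩, hvF⟩

variable [Finite V]

theorem ncard_coe_sdiff_coe {A B : Submodule K V} (h : A ≤ B) :
    (((B : Set V) \ A).ncard : ℚ) =
      (Nat.card K : ℚ) ^ finrank K B - (Nat.card K : ℚ) ^ finrank K A := by
  have ncard_coe (C : Submodule K V) : (C : Set V).ncard = Nat.card K ^ finrank K C :=
    Module.natCard_eq_pow_finrank
  rw [Set.cast_ncard_sdiff h (Set.toFinite _), ncard_coe, ncard_coe, Nat.cast_pow,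
    Nat.cast_pow]

theorem ncard_extensionVectors_mul {𝒮 : Set (Submodule K V)} (h𝒮 : IsLowerSet 𝒮) {m : ℕ}
    {A : Submodule K V} {x : ℚ}
    (hx : ∀ v ∈ extensionVectors 𝒮 A,
      ((membersAbove 𝒮 m (A ⊔ Submodule.span K {v})).ncard : ℚ) = x) :
    (extensionVectors 𝒮 A).ncard * x =
      (membersAbove 𝒮 m A).ncard * ((Nat.card K : ℚ) ^ m - (Nat.card K : ℚ) ^ finrank K A) := by
  refine ncard_mul_eq_ncard_mul (fun v F => v ∈ F) (Set.toFinite _) (Set.toFinite _)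
    (fun v hv => ?_) fun F ⟨hF, hAF, hFm⟩ => ?_
  · rw [sep_mem_membersAbove, hx v hv]
  · rw [sep_mem_extensionVectors h𝒮 hF hAF, ncard_coe_sdiff_coe hAF, hFm]

theorem ncard_membersAbove [Finite K] {𝒮 : Set (Submodule K V)} (h𝒮 : IsLowerSet 𝒮) {c : ℕ → ℚ}
    (hc : ∀ A ∈ 𝒮, ((extensionVectors 𝒮 A).ncard : ℚ) = c (finrank K A)) {m : ℕ}
    {A : Submodule K V} (hA : A ∈ 𝒮) (hAm : finrank K A ≤ m) :
    ((membersAbove 𝒮 m A).ncard : ℚ) =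
      ∏ i ∈ Ico (finrank K A) m, c i / ((Nat.card K : ℚ) ^ m - (Nat.card K : ℚ) ^ i) := by
  induction hd : m - finrank K A generalizing A with
  | zero =>
    obtain rfl : finrank K A = m := by omega
    simp [membersAbove_finrank_self hA]
  | succ d ih =>
    have hlt : finrank K A < m := by omega
    have hpow : (Nat.card K : ℚ) ^ finrank K A < (Nat.card K : ℚ) ^ m :=
      pow_lt_pow_right₀ (by exact_mod_cast Finite.one_lt_card) hlt
    have hstep := ncard_extensionVectors_mul h𝒮 (m := m) (A := A) fun v ⟨hvA, hv⟩ => by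
      have hrank := Submodule.finrank_sup_span_singleton hvA
      rw [ih hv (by omega) (by omega), hrank]
    rw [prod_eq_prod_Ico_succ_bot hlt, div_mul_eq_mul_div, eq_div_iff (sub_pos.2 hpow).ne',
      ← hstep, hc A hA]

end HereditaryFamilies

section SubspacesOfSubspace

theorem extensionVectors_Iic {A W : Submodule K V} (hAW : A ≤ W) :
    extensionVectors (Set.Iic W) A = (W : Set V) \ A := by
  ext v
  simp [extensionVectors, hAW, and_comm]

theorem sep_le_membersAbove_Iic (T W F : Submodule K V) (j : ℕ) :
    {R ∈ membersAbove (Set.Iic W) j T | R ≤ F} = membersAbove (Set.Iic (F ⊓ W)) j T := by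
  ext R
  simp only [membersAbove, Set.mem_ofPred_eq, Set.mem_Iic, le_inf_iff]
  tauto

theorem ncard_membersAbove_Iic [Finite K] [Finite V] {T W : Submodule K V} (hTW : T ≤ W) {j : ℕ}
    (hj : finrank K T ≤ j) :
    ((membersAbove (Set.Iic W) j T).ncard : ℚ) =
      gaussBinom (Nat.card K) (finrank K W - finrank K T) (j - finrank K T) := by
  rw [gaussBinom_sub_sub_eq_prod_Ico Nat.card_pos.ne' (Submodule.finrank_mono hTW) hj]
  refine ncard_membersAbove (isLowerSet_Iic W)
    (c := fun i => (Nat.card K : ℚ) ^ finrank K W - (Nat.card K : ℚ) ^ i) (fun A hA => ?_) hTW hj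
  rw [extensionVectors_Iic hA, ncard_coe_sdiff_coe hA]

end SubspacesOfSubspace

section TotallyIsotropicSubspaces

variable {f : V →ₗ[K] V →ₗ[K] K}

theorem isLowerSet_totallyIsotropic : IsLowerSet {F | TotallyIsotropic f F} :=
  fun _ _ hAB hB x hx y hy => hB x (hAB hx) y (hAB hy)

theorem TotallyIsotropic.sup_span_singleton_iff (hf : f.IsAlt) {A : Submodule K V}
    (hA : TotallyIsotropic f A) {v : V} :
    TotallyIsotropic f (A ⊔ Submodule.span K {v}) ↔ v ∈ A.orthogonalBilin f := by
  constructor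
  · intro h x hx
    exact h x (Submodule.mem_sup_left hx) v
      (Submodule.mem_sup_right (Submodule.mem_span_singleton_self v))
  · intro hv x hx y hy
    obtain ⟨a, ha, r, rfl⟩ : ∃ a ∈ A, ∃ r : K, a + r • v = x := by
      simpa [Submodule.mem_sup, Submodule.mem_span_singleton] using hx
    obtain ⟨b, hb, s, rfl⟩ : ∃ b ∈ A, ∃ s : K, b + s • v = y := by
      simpa [Submodule.mem_sup, Submodule.mem_span_singleton] using hy
    have hav : f a v = 0 := hv a ha
    have hvb : f v b = 0 := hf.isRefl b v (hv b hb)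
    simp [hA a ha b hb, hav, hvb, hf v]

theorem extensionVectors_totallyIsotropic (hf : f.IsAlt) {A : Submodule K V}
    (hA : TotallyIsotropic f A) :
    extensionVectors {F | TotallyIsotropic f F} A = (A.orthogonalBilin f : Set V) \ A := by
  ext v
  simp [extensionVectors, hA.sup_span_singleton_iff hf, and_comm]

theorem sep_le_polar {T R : Submodule K V} (hTR : T ≤ R) (m : ℕ) :
    {F ∈ {F | F ∈ polar f m ∧ T ≤ F} | R ≤ F} =
      membersAbove {F | TotallyIsotropic f F} m R := by
  ext F
  constructor
  · rintro ⟨⟨⟨hF, hFm⟩, -⟩, hRF⟩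
    exact ⟨hF, hRF, hFm⟩
  · rintro ⟨hF, hRF, hFm⟩
    exact ⟨⟨⟨hF, hFm⟩, hTR.trans hRF⟩, hRF⟩

theorem ncard_membersAbove_totallyIsotropic [Finite K] [Finite V] (hf : f.IsAlt)
    (hnd : f.Nondegenerate) {ν : ℕ} (hV : finrank K V = 2 * ν) {R : Submodule K V}
    (hR : TotallyIsotropic f R) {m : ℕ} (hRm : finrank K R ≤ m) (hm : m ≤ ν) :
    ((membersAbove {F | TotallyIsotropic f F} m R).ncard : ℚ) =
      Nprime (Nat.card K) (finrank K R) m ν := by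
  rw [Nprime_eq_prod_Ico Nat.card_pos.ne' hm]
  refine ncard_membersAbove isLowerSet_totallyIsotropic
    (c := fun i => (Nat.card K : ℚ) ^ (2 * ν - i) - (Nat.card K : ℚ) ^ i)
    (fun A (hA : TotallyIsotropic f A) => ?_) hR hRm
  have hAperp : A ≤ A.orthogonalBilin f := fun x hx y hy => hA y hy x hx
  have hrank : finrank K (A.orthogonalBilin f) = 2 * ν - finrank K A :=
    hV ▸ LinearMap.BilinForm.finrank_orthogonal hnd A
  rw [extensionVectors_totallyIsotropic hf hA, ncard_coe_sdiff_coe hAperp, hrank]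

end TotallyIsotropicSubspaces

theorem stmt_12_general [Finite K] [Finite V] {f : V →ₗ[K] V →ₗ[K] K} (hf : f.IsAlt)
    (hnd : f.Nondegenerate) {ν m j : ℕ} (hV : finrank K V = 2 * ν) {M T : Submodule K V}
    (hM : TotallyIsotropic f M) (hTM : T ≤ M) (hTj : finrank K T ≤ j) (hjm : j ≤ m) (hm : m ≤ ν) :
    gaussBinom (Nat.card K) (finrank K M - finrank K T) (j - finrank K T) *
        Nprime (Nat.card K) j m ν =
      ∑ i ∈ Icc j (finrank K M), gaussBinom (Nat.card K) (i - finrank K T) (j - finrank K T) *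
        ({F | F ∈ polar f m ∧ T ≤ F ∧ finrank K ↥(F ⊓ M) = i}.ncard : ℚ) := by
  have hcount := ncard_mul_eq_sum_ncard_fiber_mul (fun R F : Submodule K V => R ≤ F)
    (Set.toFinite _) (Set.toFinite _)
    (s := membersAbove (Set.Iic M) j T) (t := {F | F ∈ polar f m ∧ T ≤ F})
    (g := fun F => finrank K ↥(F ⊓ M)) (I := Icc j (finrank K M))
    (x := Nprime (Nat.card K) j m ν)
    (y := fun i => gaussBinom (Nat.card K) (i - finrank K T) (j - finrank K T)) ?_ ?_ ?_
  · rw [← ncard_membersAbove_Iic hTM hTj, hcount]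
    refine sum_congr rfl fun i _ => ?_
    simp only [Set.mem_ofPred_eq, and_assoc, mul_comm]
  · rintro R ⟨hRM, -, rfl⟩ F - hRF
    exact mem_Icc.2
      ⟨Submodule.finrank_mono (le_inf hRF hRM), Submodule.finrank_mono inf_le_right⟩
  · rintro R ⟨hRM, hTR, rfl⟩
    rw [sep_le_polar hTR, ncard_membersAbove_totallyIsotropic hf hnd hV
      (isLowerSet_totallyIsotropic hRM hM) hjm hm]
  · rintro F ⟨-, hTF⟩ -
    rw [sep_le_membersAbove_Iic, ncard_membersAbove_Iic (le_inf hTF hTM) hTj]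

theorem stmt_12
    (q ν m₁ m₂ t j : ℕ) (hq : IsPrimePow q)
    {K : Type} [Field K] [Fintype K] (hK : Fintype.card K = q)
    (f : (Fin (2 * ν) → K) →ₗ[K] (Fin (2 * ν) → K) →ₗ[K] K)
    (halt : ∀ v, f v v = 0)
    (hnd : ∀ v, (∀ w, f v w = 0) → v = 0)
    (ht : 0 < t) (hm₁ : t + 1 ≤ m₁) (hm₂ : t + 1 ≤ m₂) (hm₁ν : m₁ < ν) (hm₂ν : m₂ < ν)
    (M : Submodule K (Fin (2 * ν) → K)) (hM : M ∈ polar f (m₂ + 1))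
    (T : Submodule K (Fin (2 * ν) → K)) (hTM : T ≤ M) (hT : finrank K T = t)
    (hj₁ : t + 1 ≤ j) (hj₂ : j ≤ min m₁ (m₂ + 1)) :
    gaussBinom q (m₂ - t + 1) (j - t) * Nprime q j m₁ ν =
      ∑ i ∈ Finset.Icc j (m₂ + 1), gaussBinom q (i - t) (j - t) *
        ({F | F ∈ polar f m₁ ∧ T ≤ F ∧ finrank K ↥(F ⊓ M) = i}.ncard : ℚ) := by
  subst hK hT
  have hf : f.IsAlt := halt
  have hcodim : finrank K M - finrank K T = m₂ - finrank K T + 1 := by rw [hM.2]; omega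
  have h := stmt_12_general hf (hf.isRefl.nondegenerate_iff_separatingLeft.2 hnd)
    (finrank_fin_fun K) hM.1 hTM (by omega) (hj₂.trans (min_le_left _ _)) hm₁ν.le
  rwa [hcodim, hM.2, Nat.card_eq_fintype_card] at h

end
end

section
/- Let q be a prime power and let ν, m₁, m₂, t be positive integers with ν > m₁ ≥ t+1 and ν > m₂ ≥ t+1. Then for every M ∈ 𝒫_{m₂+1} and every t-dimensional subspace T of M, |𝒞₁(M,T;m₁,t)|·|𝒞₂(M,T;m₂)| > s₀(ν,m₁,m₂+1,t)·N'(t;m₂;2ν), where s₀(ν,m,s,t) = [s−t choose 1]_q·N'(t+1;m;2ν) − q·[s−t choose 2]_q·N'(t+2;m;2ν). -/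
open Finset Module

noncomputable section

variable {K V : Type*} [Field K] [AddCommGroup V] [Module K V]

/-!
Call a subspace of `M` that covers `T` a *point*. A member `F` of `𝒫_{m₁}` through `T` lies in `𝒞₁`
exactly when it contains a point, and the points it contains are those of the projective space of
`(F ∩ M) / T`, so there are none, one, or at least `q + 1` of them. Hence, if `F` contains `x`
points, `x - x (x - 1) / (q + 1)` is at most the indicator of `F ∈ 𝒞₁`. Summing over all `F`, and
using that `N'(t+1;m₁;2ν)` of the `F` pass through a given point and at most `N'(t+2;m₁;2ν)` through
two given points, yields `s₀ ≤ |𝒞₁|`. The inequality becomes strict because `𝒞₂` contains, besides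
the `N'(t;m₂;2ν)` subspaces through `T`, some hyperplane of `M` that does not contain `T`.
-/

section DoubleCounting

variable {α β : Type*} {r : α → β → Prop}

theorem ncard_mul_eq_ncard_mul_s13 {R : Type*} [Semiring R] {P : Set α} {B : Set β}
    (hP : P.Finite) (hB : B.Finite) {d k : R}
    (hd : ∀ p ∈ P, ({b ∈ B | r p b}.ncard : R) = d)
    (hk : ∀ b ∈ B, ({p ∈ P | r p b}.ncard : R) = k) :
    (P.ncard : R) * d = B.ncard * k := by
  classical
  lift P to Finset α using hP
  lift B to Finset β using hB
  simp only [Finset.mem_coe, ← Finset.coe_filter, Set.ncard_coe_finset] at hd hk ⊢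
  have edges := congrArg (Nat.cast : ℕ → R)
    (sum_card_bipartiteAbove_eq_sum_card_bipartiteBelow r (s := P) (t := B))
  rw [Nat.cast_sum, Nat.cast_sum] at edges
  calc (#P : R) * d = ∑ p ∈ P, (#(B.bipartiteAbove r p) : R) := by
        rw [← nsmul_eq_mul]
        exact (sum_eq_card_nsmul hd).symm
    _ = ∑ b ∈ B, (#(P.bipartiteBelow r b) : R) := edges
    _ = #B * k := by
        rw [← nsmul_eq_mul]
        exact sum_eq_card_nsmul hk

theorem cast_card_offDiag {R : Type*} [Ring R] (s : Finset α) :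
    (#s.offDiag : R) = #s * (#s - 1) := by
  classical
  rw [offDiag_card, Nat.cast_sub (Nat.le_mul_self _), Nat.cast_mul, mul_sub, mul_one]

variable {𝕜 : Type*} [Field 𝕜] [LinearOrder 𝕜] [IsStrictOrderedRing 𝕜]

theorem sum_card_bipartiteBelow_mul_pred_le [∀ a b, Decidable (r a b)]
    {P : Finset α} {B : Finset β} {e : 𝕜}
    (he : ∀ p ∈ P, ∀ p' ∈ P, p ≠ p' → (#{b ∈ B | r p b ∧ r p' b} : 𝕜) ≤ e) :
    ∑ b ∈ B, (#(P.bipartiteBelow r b) * (#(P.bipartiteBelow r b) - 1) : 𝕜) ≤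
      #P * (#P - 1) * e := by
  classical
  let r₂ : α × α → β → Prop := fun pp b ↦ r pp.1 b ∧ r pp.2 b
  have offDiag_below (b : β) : (P.bipartiteBelow r b).offDiag = P.offDiag.bipartiteBelow r₂ b := by
    grind [mem_bipartiteBelow]
  calc ∑ b ∈ B, (#(P.bipartiteBelow r b) * (#(P.bipartiteBelow r b) - 1) : 𝕜)
      = ∑ b ∈ B, (#(P.offDiag.bipartiteBelow r₂ b) : 𝕜) := by
        simp only [← cast_card_offDiag, offDiag_below]
    _ = ∑ pp ∈ P.offDiag, (#(B.bipartiteAbove r₂ pp) : 𝕜) := by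
        exact_mod_cast (sum_card_bipartiteAbove_eq_sum_card_bipartiteBelow r₂).symm
    _ ≤ #P.offDiag • e := by
        refine sum_le_card_nsmul _ _ _ fun pp hpp ↦ ?_
        obtain ⟨hp, hp', hne⟩ := mem_offDiag.1 hpp
        exact he _ hp _ hp' hne
    _ = #P * (#P - 1) * e := by rw [nsmul_eq_mul, cast_card_offDiag]

theorem sub_mul_sub_one_div_le_ite {x : ℕ} {c : 𝕜} (hc : 0 < c) (hx : x ≤ 1 ∨ c ≤ x) :
    (x : 𝕜) - x * (x - 1) / c ≤ if 0 < x then 1 else 0 := by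
  rcases x.eq_zero_or_pos with rfl | hpos
  · simp
  rw [if_pos hpos, sub_le_comm, le_div_iff₀ hc]
  have hone : (1 : 𝕜) ≤ x := by exact_mod_cast hpos
  rcases hx with hle | hge
  · obtain rfl : x = 1 := by omega
    simp
  · nlinarith

/-- The bound is the sum over all blocks `b` of `x - x * (x - 1) / c`, where `x` is the number of
points of `P` on `b`; each summand is at most `1`, and it is `0` when `x = 0`. -/
theorem le_ncard_incident {P : Set α} {B : Set β} (hP : P.Finite) (hB : B.Finite)
    {d e c : 𝕜} (hc : 0 < c)
    (hd : ∀ p ∈ P, d ≤ {b ∈ B | r p b}.ncard)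
    (he : ∀ p ∈ P, ∀ p' ∈ P, p ≠ p' → ({b ∈ B | r p b ∧ r p' b}.ncard : 𝕜) ≤ e)
    (hblock : ∀ b ∈ B, {p ∈ P | r p b}.ncard ≤ 1 ∨ c ≤ {p ∈ P | r p b}.ncard) :
    P.ncard * d - P.ncard * (P.ncard - 1) * e / c ≤ {b ∈ B | ∃ p ∈ P, r p b}.ncard := by
  classical
  lift P to Finset α using hP
  lift B to Finset β using hB
  simp only [Finset.mem_coe, ← Finset.coe_filter, Set.ncard_coe_finset] at hd he hblock ⊢
  have first_moment : #P * d ≤ ∑ b ∈ B, (#(P.bipartiteBelow r b) : 𝕜) := by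
    rw [← nsmul_eq_mul, ← Nat.cast_sum, ← sum_card_bipartiteAbove_eq_sum_card_bipartiteBelow,
      Nat.cast_sum]
    exact card_nsmul_le_sum _ _ _ hd
  calc (#P * d - #P * (#P - 1) * e / c : 𝕜)
      ≤ ∑ b ∈ B, (#(P.bipartiteBelow r b) : 𝕜)
        - (∑ b ∈ B, (#(P.bipartiteBelow r b) * (#(P.bipartiteBelow r b) - 1) : 𝕜)) / c := by
        gcongr
        exact sum_card_bipartiteBelow_mul_pred_le he
    _ = ∑ b ∈ B, ((#(P.bipartiteBelow r b) : 𝕜)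
        - #(P.bipartiteBelow r b) * (#(P.bipartiteBelow r b) - 1) / c) := by
        rw [sum_sub_distrib, sum_div]
    _ ≤ ∑ b ∈ B, if 0 < #(P.bipartiteBelow r b) then (1 : 𝕜) else 0 :=
        sum_le_sum fun b hb ↦ sub_mul_sub_one_div_le_ite hc (hblock b hb)
    _ = #{b ∈ B | ∃ p ∈ P, r p b} := by
        simp only [sum_boole, card_pos, bipartiteBelow, filter_nonempty_iff]

end DoubleCounting

section Covers

variable {α : Type*}

/-- The elements of the interval `[a, b]` that cover `a`. For subspaces `T ≤ U` these are the
points of the projective space of `U ⧸ T`. -/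
def coversBelow [Preorder α] (a b : α) : Set α :=
  {x | a ⋖ x ∧ x ≤ b}

theorem sep_le_coversBelow [Lattice α] (a b c : α) :
    {x ∈ coversBelow a b | x ≤ c} = coversBelow a (c ⊓ b) := by
  ext x
  simp only [coversBelow, Set.mem_ofPred_eq, le_inf_iff]
  tauto

theorem exists_covBy_and_not_le [Lattice α] [BoundedOrder α] [IsModularLattice α]
    [ComplementedLattice α] [IsAtomic α] {a b : α} (ha : a ≠ ⊥) (hab : a ≤ b) :
    ∃ c, c ⋖ b ∧ ¬ a ≤ c := by
  obtain ⟨p, hp, hpa⟩ := (eq_bot_or_exists_atom_le a).resolve_left ha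
  obtain ⟨h, hph⟩ := exists_isCompl p
  have hcoatom : IsCoatom h := hph.symm.isCoatom_iff_isAtom.2 hp
  have hsup : h ⊔ b = ⊤ :=
    top_le_iff.1 (hph.symm.sup_eq_top.ge.trans (sup_le_sup_left (hpa.trans hab) h))
  refine ⟨h ⊓ b, inf_covBy_of_covBy_sup_left (hsup ▸ hcoatom.covBy_top), fun hle ↦ hp.1 ?_⟩
  exact hph.disjoint.eq_bot_of_le (hpa.trans (hle.trans inf_le_left))

end Covers

section GaussianCoefficients

variable {q : ℕ}

theorem gaussBinom_one_right (q n : ℕ) : gaussBinom q n 1 = ((q : ℚ) ^ n - 1) / (q - 1) := by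
  simp [gaussBinom]

theorem mul_gaussBinom_two_right (hq : 1 < q) (n : ℕ) :
    q * gaussBinom q n 2 = gaussBinom q n 1 * (gaussBinom q n 1 - 1) / (q + 1) := by
  have hq' : (1 : ℚ) < q := by exact_mod_cast hq
  have hq₀ : (q : ℚ) ≠ 0 := by positivity
  have hsub : (q : ℚ) - 1 ≠ 0 := by linarith
  have hadd : (q : ℚ) + 1 ≠ 0 := by positivity
  have htwo : gaussBinom q n 2 =
      ((q : ℚ) ^ n - 1) * ((q : ℚ) ^ n / q - 1) / ((q - 1) * (q + 1) * (q - 1)) := by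
    have hsq : (q : ℚ) ^ (2 : ℤ) - 1 = (q - 1) * (q + 1) := by
      rw [zpow_ofNat]
      ring
    simp [gaussBinom, prod_range_succ, zpow_sub_one₀ hq₀, hsq, ← div_eq_mul_inv, -zpow_ofNat]
  rw [htwo, gaussBinom_one_right]
  field_simp
  ring

theorem gaussBinom_one_right_le_one_or_le (hq : 1 < q) (n : ℕ) :
    gaussBinom q n 1 ≤ 1 ∨ (q : ℚ) + 1 ≤ gaussBinom q n 1 := by
  have hq' : (1 : ℚ) < q := by exact_mod_cast hq
  rw [gaussBinom_one_right, div_le_one (by linarith), le_div_iff₀ (by linarith)]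
  rcases le_or_gt n 1 with hn | hn
  · left
    linarith [pow_le_pow_right₀ hq'.le hn]
  · right
    linarith [pow_le_pow_right₀ hq'.le hn]

theorem gaussBinom_one_right_pos (hq : 1 < q) {n : ℕ} (hn : n ≠ 0) : 0 < gaussBinom q n 1 := by
  have hq' : (1 : ℚ) < q := by exact_mod_cast hq
  rw [gaussBinom_one_right]
  exact div_pos (sub_pos.2 (one_lt_pow₀ hq' hn)) (sub_pos.2 hq')

theorem Nprime_pos {m ν : ℕ} (hq : 1 < q) (a : ℕ) (hm : m ≤ ν) : 0 < Nprime q a m ν := by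
  have hq' : (1 : ℚ) < q := by exact_mod_cast hq
  refine prod_pos fun i hi ↦ ?_
  have hi₁ := (mem_Icc.1 hi).1
  exact div_pos (sub_pos.2 (one_lt_zpow₀ hq' (by omega))) (sub_pos.2 (one_lt_zpow₀ hq' (by omega)))

theorem Nprime_mul_gaussBinom {a m ν : ℕ} (hq : 1 < q) (ham : a < m) (hm : m ≤ ν) :
    Nprime q a m ν * gaussBinom q (m - a) 1 =
      gaussBinom q (2 * (ν - a)) 1 * Nprime q (a + 1) m ν := by
  have hq' : (1 : ℚ) < q := by exact_mod_cast hq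
  have htop : (q : ℚ) ^ (m - a) - 1 ≠ 0 := (sub_pos.2 (one_lt_pow₀ hq' (by omega))).ne'
  have hrec : Nprime q a m ν =
      Nprime q (a + 1) m ν * (((q : ℚ) ^ (2 * (ν - a)) - 1) / ((q : ℚ) ^ (m - a) - 1)) := by
    have hexp : 2 * ((ν : ℤ) - m + (m - a : ℕ)) = (2 * (ν - a) : ℕ) := by omega
    rw [Nprime, Nprime, show m - a = m - (a + 1) + 1 by omega, prod_Icc_succ_top (by omega),
      show m - (a + 1) + 1 = m - a by omega, hexp, zpow_natCast, zpow_natCast]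
  rw [hrec, gaussBinom_one_right, gaussBinom_one_right]
  field_simp

end GaussianCoefficients

section Subspaces

theorem sup_span_singleton_eq_of_covBy {T X : Submodule K V} {v : V} (hTX : T ⋖ X)
    (hvX : v ∈ X) (hvT : v ∉ T) : T ⊔ Submodule.span K {v} = X := by
  refine (hTX.eq_or_eq le_sup_left (sup_le hTX.le ?_)).resolve_left fun heq ↦ hvT ?_
  · rwa [Submodule.span_singleton_le_iff_mem]
  · rw [← heq]
    exact Submodule.mem_sup_right (Submodule.mem_span_singleton_self v)

variable [FiniteDimensional K V] {T U X Y : Submodule K V}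

theorem finrank_eq_add_one_of_covBy (hTX : T ⋖ X) : finrank K X = finrank K T + 1 := by
  obtain ⟨v, hvX, hvT⟩ := SetLike.exists_of_lt hTX.lt
  rw [← sup_span_singleton_eq_of_covBy hTX hvX hvT, Submodule.finrank_sup_span_singleton hvT]

theorem finrank_sup_eq_add_two_of_covBy (hTX : T ⋖ X) (hTY : T ⋖ Y) (hXY : X ≠ Y) :
    finrank K ↥(X ⊔ Y) = finrank K T + 2 := by
  obtain rfl : X ⊓ Y = T := hTX.wcovBy.inf_eq hTY.wcovBy hXY
  rw [finrank_eq_add_one_of_covBy (hTX.sup_of_inf_of_inf_left hTY), finrank_eq_add_one_of_covBy hTX]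

variable [Finite K]

theorem ncard_coe_diff (hTU : T ≤ U) :
    ((U \ T : Set V).ncard : ℚ) =
      (Nat.card K : ℚ) ^ finrank K U - (Nat.card K : ℚ) ^ finrank K T := by
  have : Finite V := Module.finite_of_finite K
  have ncard_coe (W : Submodule K V) : (W : Set V).ncard = Nat.card K ^ finrank K W :=
    Module.natCard_eq_pow_finrank (K := K) (V := W)
  rw [Set.cast_ncard_sdiff hTU (Set.toFinite _), ncard_coe, ncard_coe, Nat.cast_pow, Nat.cast_pow]

theorem ncard_coversBelow (hTU : T ≤ U) :
    ((coversBelow T U).ncard : ℚ) = gaussBinom (Nat.card K) (finrank K U - finrank K T) 1 := by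
  have : Finite V := Module.finite_of_finite K
  have hq : (1 : ℚ) < Nat.card K := by exact_mod_cast Finite.one_lt_card
  have vectors_of_cover : ∀ X ∈ coversBelow T U, ({v ∈ (U \ T : Set V) | v ∈ X}.ncard : ℚ) =
      (Nat.card K : ℚ) ^ finrank K T * (Nat.card K - 1) := by
    rintro X ⟨hTX, hXU⟩
    have hsep : {v ∈ (U \ T : Set V) | v ∈ X} = (X \ T : Set V) := by
      ext v
      exact ⟨fun hv ↦ ⟨hv.2, hv.1.2⟩, fun hv ↦ ⟨⟨hXU hv.1, hv.2⟩, hv.1⟩⟩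
    rw [hsep, ncard_coe_diff hTX.le, finrank_eq_add_one_of_covBy hTX]
    ring
  have covers_of_vector : ∀ v ∈ (U \ T : Set V), ({X ∈ coversBelow T U | v ∈ X}.ncard : ℚ) = 1 := by
    rintro v ⟨hvU, hvT⟩
    rw [Nat.cast_eq_one, Set.ncard_eq_one]
    refine ⟨T ⊔ Submodule.span K {v}, Set.eq_singleton_iff_unique_mem.2 ⟨⟨⟨?_, ?_⟩, ?_⟩, ?_⟩⟩
    · rw [sup_comm]
      exact Submodule.covBy_span_singleton_sup hvT
    · exact sup_le hTU ((Submodule.span_singleton_le_iff_mem v U).2 hvU)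
    · exact Submodule.mem_sup_right (Submodule.mem_span_singleton_self v)
    · exact fun X hX ↦ (sup_span_singleton_eq_of_covBy hX.1.1 hX.2 hvT).symm
  have count := ncard_mul_eq_ncard_mul_s13 (Set.toFinite _) (Set.toFinite _)
    vectors_of_cover covers_of_vector
  obtain ⟨j, hj⟩ := Nat.exists_eq_add_of_le (Submodule.finrank_mono hTU)
  rw [ncard_coe_diff hTU, hj, mul_one] at count
  rw [hj, add_tsub_cancel_left, gaussBinom_one_right, eq_div_iff (by linarith)]
  have hpow : (Nat.card K : ℚ) ^ finrank K T ≠ 0 := by positivity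
  apply mul_left_cancel₀ hpow
  linear_combination count

end Subspaces

section Isotropic

variable {f : V →ₗ[K] V →ₗ[K] K} {A B M T : Submodule K V}

theorem TotallyIsotropic.mono (hB : TotallyIsotropic f B) (hAB : A ≤ B) : TotallyIsotropic f A :=
  fun x hx y hy ↦ hB x (hAB hx) y (hAB hy)

theorem TotallyIsotropic.le_orthogonal (hB : TotallyIsotropic f B) (hAB : A ≤ B) :
    B ≤ LinearMap.BilinForm.orthogonal f A :=
  fun y hy x hx ↦ hB x (hAB hx) y hy

theorem TotallyIsotropic.of_covBy_of_le_orthogonal (halt : f.IsAlt) (hA : TotallyIsotropic f A)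
    (hAB : A ⋖ B) (hB : B ≤ LinearMap.BilinForm.orthogonal f A) : TotallyIsotropic f B := by
  obtain ⟨v, hvB, hvA⟩ := SetLike.exists_of_lt hAB.lt
  have left_zero (x) (hx : x ∈ A) : f x v = 0 := hB hvB x hx
  have right_zero (x) (hx : x ∈ A) : f v x = 0 := halt.isRefl _ _ (left_zero x hx)
  rw [← sup_span_singleton_eq_of_covBy hAB hvB hvA]
  intro x hx y hy
  obtain ⟨a, ha, _, hc, rfl⟩ := Submodule.mem_sup.1 hx
  obtain ⟨c, rfl⟩ := Submodule.mem_span_singleton.1 hc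
  obtain ⟨b, hb, _, hd, rfl⟩ := Submodule.mem_sup.1 hy
  obtain ⟨d, rfl⟩ := Submodule.mem_span_singleton.1 hd
  simp [hA a ha b hb, left_zero a ha, right_zero b hb, halt v]

theorem sep_le_C3 (hAB : A ≤ B) (m : ℕ) : {F ∈ C3 f A m | B ≤ F} = C3 f B m := by
  ext F
  exact ⟨fun hF ↦ ⟨hF.1.1, hF.2⟩, fun hF ↦ ⟨⟨hF.1, hAB.trans hF.2⟩, hF.2⟩⟩

variable [FiniteDimensional K V]

theorem TotallyIsotropic.two_mul_finrank_le (hnd : f.Nondegenerate) (hA : TotallyIsotropic f A) :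
    2 * finrank K A ≤ finrank K V := by
  have hle := Submodule.finrank_mono (hA.le_orthogonal le_rfl)
  rw [LinearMap.BilinForm.finrank_orthogonal hnd] at hle
  have := A.finrank_le
  omega

theorem C1_eq_sep_exists_coversBelow (hTM : T ≤ M) (m : ℕ) :
    C1 f M T m (finrank K T) = {F ∈ C3 f T m | ∃ X ∈ coversBelow T M, X ≤ F} := by
  ext F
  constructor
  · rintro ⟨hF, hTF, hrank⟩
    have hlt : T < F ⊓ M := lt_of_le_of_ne (le_inf hTF hTM) fun heq ↦ by
      rw [← heq] at hrank
      omega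
    obtain ⟨X, hTX, hX⟩ := exists_covBy_le_of_lt hlt
    exact ⟨⟨hF, hTF⟩, X, ⟨hTX, hX.trans inf_le_right⟩, hX.trans inf_le_left⟩
  · rintro ⟨⟨hF, hTF⟩, X, ⟨hTX, hXM⟩, hXF⟩
    refine ⟨hF, hTF, ?_⟩
    rw [← finrank_eq_add_one_of_covBy hTX]
    exact Submodule.finrank_mono (le_inf hXF hXM)

theorem C3_eq_singleton (hA : TotallyIsotropic f A) : C3 f A (finrank K A) = {A} := by
  ext F
  constructor
  · rintro ⟨⟨_, hrank⟩, hAF⟩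
    exact (Submodule.eq_of_le_of_finrank_eq hAF hrank.symm).symm
  · rintro rfl
    exact ⟨⟨hA, rfl⟩, le_rfl⟩

theorem C3_eq_empty {m : ℕ} (hm : m < finrank K A) : C3 f A m = ∅ := by
  refine Set.eq_empty_of_forall_notMem fun F hF ↦ ?_
  have := Submodule.finrank_mono hF.2
  have := hF.1.2
  omega

theorem insert_subset_C2 {m : ℕ} {W : Submodule K V} (hM : M ∈ polar f (m + 1)) (hW : W ⋖ M) :
    insert W (C3 f T m) ⊆ C2 f M T m := by
  have hrank := finrank_eq_add_one_of_covBy hW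
  have := hM.2
  exact Set.insert_subset (Or.inr ⟨⟨hM.1.mono hW.le, by omega⟩, hW.le⟩) fun _ ↦ Or.inl

variable [Finite K] {m ν : ℕ}

theorem ncard_coversBelow_mul_eq_ncard_C3_mul {d : ℚ}
    (hd : ∀ X ∈ coversBelow A (LinearMap.BilinForm.orthogonal f A), ((C3 f X m).ncard : ℚ) = d) :
    ((coversBelow A (LinearMap.BilinForm.orthogonal f A)).ncard : ℚ) * d =
      (C3 f A m).ncard * gaussBinom (Nat.card K) (m - finrank K A) 1 := by
  have : Finite V := Module.finite_of_finite K
  refine ncard_mul_eq_ncard_mul_s13 (r := (· ≤ ·)) (Set.toFinite _) (Set.toFinite _)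
    (fun X hX ↦ ?_) fun F hF ↦ ?_
  · rw [sep_le_C3 hX.1.le, hd X hX]
  · obtain ⟨⟨hF, rfl⟩, hAF⟩ := hF
    rw [sep_le_coversBelow, inf_eq_left.2 (hF.le_orthogonal hAF), ncard_coversBelow hAF]

theorem ncard_C3 (halt : f.IsAlt) (hnd : f.Nondegenerate) (hV : finrank K V = 2 * ν)
    (hA : TotallyIsotropic f A) (ham : finrank K A ≤ m) (hm : m ≤ ν) :
    ((C3 f A m).ncard : ℚ) = Nprime (Nat.card K) (finrank K A) m ν := by
  have hq : 1 < Nat.card K := Finite.one_lt_card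
  induction hk : m - finrank K A generalizing A with
  | zero =>
    obtain rfl : m = finrank K A := by omega
    simp [C3_eq_singleton hA, Nprime]
  | succ k ih =>
    have hcovers : ∀ X ∈ coversBelow A (LinearMap.BilinForm.orthogonal f A),
        ((C3 f X m).ncard : ℚ) = Nprime (Nat.card K) (finrank K A + 1) m ν := by
      rintro X ⟨hAX, hX⟩
      have hrank := finrank_eq_add_one_of_covBy hAX
      rw [ih (hA.of_covBy_of_le_orthogonal halt hAX hX) (by omega) (by omega), hrank]
    have count := ncard_coversBelow_mul_eq_ncard_C3_mul hcovers
    rw [ncard_coversBelow (hA.le_orthogonal le_rfl),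
      LinearMap.BilinForm.finrank_orthogonal hnd, hV,
      show 2 * ν - finrank K A - finrank K A = 2 * (ν - finrank K A) by omega,
      ← Nprime_mul_gaussBinom hq (by omega) hm] at count
    exact (mul_right_cancel₀ (gaussBinom_one_right_pos hq (by omega)).ne' count).symm

/-- Only an inequality: for `m < finrank K A` the product `Nprime` is empty, hence `1`. -/
theorem ncard_C3_le (halt : f.IsAlt) (hnd : f.Nondegenerate) (hV : finrank K V = 2 * ν)
    (hA : TotallyIsotropic f A) (hm : m ≤ ν) :
    ((C3 f A m).ncard : ℚ) ≤ Nprime (Nat.card K) (finrank K A) m ν := by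
  rcases le_or_gt (finrank K A) m with ham | ham
  · exact (ncard_C3 halt hnd hV hA ham hm).le
  · rw [C3_eq_empty ham, Set.ncard_empty, Nat.cast_zero]
    exact (Nprime_pos Finite.one_lt_card _ hm).le

theorem s0_le_ncard_C1 (halt : f.IsAlt) (hnd : f.Nondegenerate) (hV : finrank K V = 2 * ν)
    (hM : TotallyIsotropic f M) (hTM : T ≤ M) (hTm : finrank K T + 1 ≤ m) (hm : m ≤ ν) :
    s0 (Nat.card K) ν m (finrank K M) (finrank K T) ≤ (C1 f M T m (finrank K T)).ncard := by
  have : Finite V := Module.finite_of_finite K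
  have hq : 1 < Nat.card K := Finite.one_lt_card
  have hs0 : s0 (Nat.card K) ν m (finrank K M) (finrank K T) =
      (coversBelow T M).ncard * Nprime (Nat.card K) (finrank K T + 1) m ν
        - (coversBelow T M).ncard * ((coversBelow T M).ncard - 1)
          * Nprime (Nat.card K) (finrank K T + 2) m ν / (Nat.card K + 1) := by
    rw [s0, mul_gaussBinom_two_right hq, ← ncard_coversBelow hTM]
    ring
  rw [hs0, C1_eq_sep_exists_coversBelow hTM]
  refine le_ncard_incident (Set.toFinite _) (Set.toFinite _) (by positivity) ?_ ?_ ?_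
  · rintro X ⟨hTX, hXM⟩
    have hrank := finrank_eq_add_one_of_covBy hTX
    rw [sep_le_C3 hTX.le, ncard_C3 halt hnd hV (hM.mono hXM) (by omega) hm, hrank]
  · rintro X ⟨hTX, hXM⟩ Y ⟨hTY, hYM⟩ hXY
    simp only [← sup_le_iff]
    rw [sep_le_C3 (hTX.le.trans le_sup_left), ← finrank_sup_eq_add_two_of_covBy hTX hTY hXY]
    exact ncard_C3_le halt hnd hV (hM.mono (sup_le hXM hYM)) hm
  · rintro F ⟨-, hTF⟩
    rw [sep_le_coversBelow, ← Nat.cast_le_one (α := ℚ), ncard_coversBelow (le_inf hTF hTM)]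
    exact gaussBinom_one_right_le_one_or_le hq _

theorem ncard_C1_pos (halt : f.IsAlt) (hnd : f.Nondegenerate) (hV : finrank K V = 2 * ν)
    (hM : TotallyIsotropic f M) (hTM : T < M) (hTm : finrank K T + 1 ≤ m) (hm : m ≤ ν) :
    0 < (C1 f M T m (finrank K T)).ncard := by
  have : Finite V := Module.finite_of_finite K
  obtain ⟨X, hTX, hXM⟩ := exists_covBy_le_of_lt hTM
  have hC3 : 0 < (C3 f X m).ncard := by
    rw [← finrank_eq_add_one_of_covBy hTX] at hTm
    rw [← Nat.cast_pos (α := ℚ), ncard_C3 halt hnd hV (hM.mono hXM) hTm hm]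
    exact Nprime_pos Finite.one_lt_card _ hm
  obtain ⟨F, hF, hXF⟩ := (Set.ncard_pos (Set.toFinite _)).1 hC3
  rw [Set.ncard_pos (Set.toFinite _), C1_eq_sep_exists_coversBelow hTM.le]
  exact ⟨F, ⟨hF, hTX.le.trans hXF⟩, X, ⟨hTX, hXM⟩, hXF⟩

theorem ncard_C3_lt_ncard_C2 (hM : M ∈ polar f (m + 1)) (hTM : T ≤ M) (hT : T ≠ ⊥) :
    (C3 f T m).ncard < (C2 f M T m).ncard := by
  have : Finite V := Module.finite_of_finite K
  obtain ⟨W, hWM, hTW⟩ := exists_covBy_and_not_le hT hTM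
  calc (C3 f T m).ncard < (insert W (C3 f T m)).ncard := by
        rw [Set.ncard_insert_of_notMem (fun hW ↦ hTW hW.2)]
        exact Nat.lt_succ_self _
    _ ≤ (C2 f M T m).ncard := Set.ncard_le_ncard (insert_subset_C2 hM hWM)

end Isotropic

theorem stmt_13_general {K V : Type*} [Field K] [Finite K] [AddCommGroup V] [Module K V]
    [FiniteDimensional K V] {f : V →ₗ[K] V →ₗ[K] K} (halt : f.IsAlt) (hnd : f.Nondegenerate)
    {ν m₁ m₂ t : ℕ} (hV : finrank K V = 2 * ν) (ht : 0 < t) (hm₁ : t + 1 ≤ m₁) (hm₁ν : m₁ ≤ ν)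
    (hm₂ : t ≤ m₂) {M T : Submodule K V} (hM : M ∈ polar f (m₂ + 1)) (hTM : T ≤ M)
    (hT : finrank K T = t) :
    s0 (Nat.card K) ν m₁ (m₂ + 1) t * Nprime (Nat.card K) t m₂ ν <
      ((C1 f M T m₁ t).ncard : ℚ) * (C2 f M T m₂).ncard := by
  subst hT
  obtain ⟨hMiso, hMrank⟩ := hM
  have hTM' : T < M := hTM.lt_of_ne fun heq ↦ by rw [heq] at hm₂; omega
  have hT₀ : T ≠ ⊥ := Submodule.one_le_finrank_iff.1 ht
  have hm₂ν : m₂ ≤ ν := by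
    have := hMiso.two_mul_finrank_le hnd
    omega
  have hC1 := s0_le_ncard_C1 halt hnd hV hMiso hTM hm₁ hm₁ν
  have hC1_pos := ncard_C1_pos halt hnd hV hMiso hTM' hm₁ hm₁ν
  have hC2 := ncard_C3_lt_ncard_C2 ⟨hMiso, hMrank⟩ hTM hT₀
  rw [← ncard_C3 halt hnd hV (hMiso.mono hTM) hm₂ hm₂ν, ← hMrank]
  calc s0 (Nat.card K) ν m₁ (finrank K M) (finrank K T) * (C3 f T m₂).ncard
      ≤ (C1 f M T m₁ (finrank K T)).ncard * (C3 f T m₂).ncard := by gcongr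
    _ < (C1 f M T m₁ (finrank K T)).ncard * (C2 f M T m₂).ncard := by gcongr

theorem stmt_13
    (q ν m₁ m₂ t : ℕ) (hq : IsPrimePow q)
    {K : Type} [Field K] [Fintype K] (hK : Fintype.card K = q)
    (f : (Fin (2 * ν) → K) →ₗ[K] (Fin (2 * ν) → K) →ₗ[K] K)
    (halt : ∀ v, f v v = 0)
    (hnd : ∀ v, (∀ w, f v w = 0) → v = 0)
    (ht : 0 < t) (hm₁ : t + 1 ≤ m₁) (hm₂ : t + 1 ≤ m₂) (hm₁ν : m₁ < ν) (hm₂ν : m₂ < ν)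
    (M : Submodule K (Fin (2 * ν) → K)) (hM : M ∈ polar f (m₂ + 1))
    (T : Submodule K (Fin (2 * ν) → K)) (hTM : T ≤ M) (hT : finrank K T = t) :
    s0 q ν m₁ (m₂ + 1) t * Nprime q t m₂ ν <
      ((C1 f M T m₁ t).ncard : ℚ) * (C2 f M T m₂).ncard := by
  have hnondeg : f.Nondegenerate :=
    (LinearMap.IsAlt.isRefl halt).nondegenerate_iff_separatingLeft.2 hnd
  rw [← hK, ← Nat.card_eq_fintype_card]
  exact stmt_13_general halt hnondeg (by simp) ht hm₁ hm₁ν.le (by omega) hM hTM hT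

end
end
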